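/- arXiv:2010.03718 — 2 statements merged into one kernel-verified Lean document; each statement's English description precedes it below -/
import Mathlib

section
/- Let A be a type and let ℓ₀, ℓ : A → ℝ be functions such that ℓ₀(a) > 0 for all a, every sublevel set {a ∈ A | ℓ₀(a) ≤ T} is finite, and the exponential growth rate of ℓ₀ equals 1. Suppose there exist B ≥ 1 and s > 0 such that (s/B)·ℓ₀(a) ≤ ℓ(a) ≤ B·s·ℓ₀(a) for every a ∈ A. Then every sublevel set of ℓ is finite, the exponential growth rate h(ℓ) of ℓ (taken as a limit superior of real numbers) satisfies 1/(B·s) ≤ h(ℓ) ≤ B/s, and consequently the renormalized function h(ℓ)·ℓ satisfies (1/B²)·ℓ₀(a) ≤ h(ℓ)·ℓ(a) ≤ B²·ℓ₀(a) for every a ∈ A. -/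
/-- The exponential growth rate of a length function `ℓ : A → ℝ`:
`h(ℓ) = limsup_{T→∞} (1/T) · log #{a ∈ A | ℓ(a) ≤ T}`, taken as a limit superior
of real numbers. -/
noncomputable def growthRate {A : Type*} (ℓ : A → ℝ) : ℝ :=
  Filter.limsup (fun T : ℝ => Real.log (Nat.card {a : A // ℓ a ≤ T}) / T) Filter.atTop

/-! If `f ≤ c * g`, then `{g ≤ T} ⊆ {f ≤ c * T}`, so the logarithmic counting rate of `g` at `T` is
at most `c` times that of `f` at `c * T`, and hence `h(g) ≤ c * h(f)`. Applying this to both halves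
of a two-sided bound `a * ℓ₀ ≤ ℓ ≤ b * ℓ₀` gives `h(ℓ₀) / b ≤ h(ℓ) ≤ h(ℓ₀) / a`; multiplying these
by the bounds on `ℓ` compares `h(ℓ) * ℓ` with `h(ℓ₀) * ℓ₀`. The limit superior of a real function
that is not eventually bounded above is `0` by convention, so `h(ℓ₀) = 1` also says that the growth
is at most exponential. -/

open Filter Set

theorem monotone_log_natCast : Monotone fun n : ℕ => Real.log n := by
  intro m n hmn
  rcases m.eq_zero_or_pos with rfl | hm
  · simpa using Real.log_natCast_nonneg n
  · exact Real.log_le_log (by exact_mod_cast hm) (by exact_mod_cast hmn)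

/-- The quantity `(1/T) · log #{a | ℓ(a) ≤ T}` whose limit superior is `growthRate ℓ`. Infinite
sublevel sets count as empty (`Nat.card` is `0` on them), and the value at `T = 0` is `0`. -/
noncomputable def logCountRate {A : Type*} (ℓ : A → ℝ) (T : ℝ) : ℝ :=
  Real.log (Nat.card {a : A // ℓ a ≤ T}) / T

section GrowthRate

variable {A : Type*} {f g : A → ℝ} {c : ℝ}

theorem growthRate_eq_limsup (f : A → ℝ) : growthRate f = limsup (logCountRate f) atTop := rfl

theorem logCountRate_nonneg (f : A → ℝ) {T : ℝ} (hT : 0 ≤ T) : 0 ≤ logCountRate f T :=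
  div_nonneg (Real.log_natCast_nonneg _) hT

theorem eventually_logCountRate_nonneg (f : A → ℝ) : ∀ᶠ T in atTop, 0 ≤ logCountRate f T :=
  (eventually_ge_atTop 0).mono fun _ hT => logCountRate_nonneg f hT

theorem growthRate_nonneg (f : A → ℝ) : 0 ≤ growthRate f := by
  rw [growthRate_eq_limsup, limsup_eq]
  refine Real.sInf_nonneg fun x hx => ?_
  obtain ⟨T, hT_nonneg, hT_le⟩ := ((eventually_logCountRate_nonneg f).and hx).exists
  exact hT_nonneg.trans hT_le

theorem isBoundedUnder_logCountRate_of_growthRate_ne_zero (hf : growthRate f ≠ 0) :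
    IsBoundedUnder (· ≤ ·) atTop (logCountRate f) := by
  contrapose! hf
  exact Real.limsup_of_not_isBoundedUnder hf

theorem sublevel_subset_of_le_mul (hc : 0 ≤ c) (h : ∀ a, f a ≤ c * g a) (T : ℝ) :
    {a | g a ≤ T} ⊆ {a | f a ≤ c * T} :=
  fun a ha => (h a).trans (mul_le_mul_of_nonneg_left ha hc)

theorem finite_sublevel_of_le_mul (hc : 0 ≤ c) (h : ∀ a, f a ≤ c * g a)
    (hfin : ∀ T, {a | f a ≤ T}.Finite) (T : ℝ) : {a | g a ≤ T}.Finite :=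
  (hfin (c * T)).subset (sublevel_subset_of_le_mul hc h T)

theorem logCountRate_le_mul_of_le_mul (hc : 0 < c) (h : ∀ a, f a ≤ c * g a) {T : ℝ} (hT : 0 ≤ T)
    (hfin : {a | f a ≤ c * T}.Finite) : logCountRate g T ≤ c * logCountRate f (c * T) := by
  have hcard : Nat.card {a // g a ≤ T} ≤ Nat.card {a // f a ≤ c * T} :=
    Nat.card_mono hfin (sublevel_subset_of_le_mul hc.le h T)
  calc logCountRate g T ≤ Real.log (Nat.card {a // f a ≤ c * T}) / T :=
        div_le_div_of_nonneg_right (monotone_log_natCast hcard) hT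
    _ = c * logCountRate f (c * T) := by
        rw [logCountRate, ← mul_div_assoc, mul_div_mul_left _ _ hc.ne']

theorem eventually_logCountRate_le_of_le_mul (hc : 0 < c) (h : ∀ a, f a ≤ c * g a)
    (hfin : ∀ T, {a | f a ≤ T}.Finite) {x : ℝ} (hx : ∀ᶠ T in atTop, logCountRate f T ≤ x) :
    ∀ᶠ T in atTop, logCountRate g T ≤ c * x := by
  have hscale : Tendsto (c * ·) atTop atTop := tendsto_id.const_mul_atTop hc
  filter_upwards [hscale.eventually hx, eventually_ge_atTop 0] with T hfT hT
  exact (logCountRate_le_mul_of_le_mul hc h hT (hfin _)).trans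
    (mul_le_mul_of_nonneg_left hfT hc.le)

theorem isBoundedUnder_logCountRate_of_le_mul (hc : 0 < c) (h : ∀ a, f a ≤ c * g a)
    (hfin : ∀ T, {a | f a ≤ T}.Finite) (hf : IsBoundedUnder (· ≤ ·) atTop (logCountRate f)) :
    IsBoundedUnder (· ≤ ·) atTop (logCountRate g) :=
  let ⟨x, hx⟩ := hf
  ⟨c * x, eventually_logCountRate_le_of_le_mul hc h hfin hx⟩

theorem growthRate_le_mul_of_le_mul (hc : 0 < c) (h : ∀ a, f a ≤ c * g a)
    (hfin : ∀ T, {a | f a ≤ T}.Finite) (hf : IsBoundedUnder (· ≤ ·) atTop (logCountRate f)) :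
    growthRate g ≤ c * growthRate f := by
  rw [← div_le_iff₀' hc]
  refine le_limsup_of_le hf fun x hx => ?_
  rw [div_le_iff₀' hc]
  exact limsup_le_of_le
    (isCoboundedUnder_le_of_eventually_le _ (eventually_logCountRate_nonneg g))
    (eventually_logCountRate_le_of_le_mul hc h hfin hx)

end GrowthRate

section BiLipschitz

variable {A : Type*} {ℓ₀ ℓ : A → ℝ} {a b : ℝ}

theorem finite_sublevel_of_mul_le (ha : 0 < a) (hlow : ∀ x, a * ℓ₀ x ≤ ℓ x)
    (hfin₀ : ∀ T, {x | ℓ₀ x ≤ T}.Finite) (T : ℝ) : {x | ℓ x ≤ T}.Finite :=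
  finite_sublevel_of_le_mul (inv_nonneg.2 ha.le) (fun x => (le_inv_mul_iff₀ ha).2 (hlow x)) hfin₀ T

theorem growthRate_mem_Icc_of_biLipschitz (ha : 0 < a) (hb : 0 < b)
    (hlow : ∀ x, a * ℓ₀ x ≤ ℓ x) (hup : ∀ x, ℓ x ≤ b * ℓ₀ x)
    (hfin₀ : ∀ T, {x | ℓ₀ x ≤ T}.Finite)
    (hbdd₀ : IsBoundedUnder (· ≤ ·) atTop (logCountRate ℓ₀)) :
    growthRate ℓ ∈ Icc (growthRate ℓ₀ / b) (growthRate ℓ₀ / a) := by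
  have hlow' : ∀ x, ℓ₀ x ≤ a⁻¹ * ℓ x := fun x => (le_inv_mul_iff₀ ha).2 (hlow x)
  have hfin := finite_sublevel_of_mul_le ha hlow hfin₀
  have hbdd := isBoundedUnder_logCountRate_of_le_mul (inv_pos.2 ha) hlow' hfin₀ hbdd₀
  constructor
  · rw [div_le_iff₀' hb]
    exact growthRate_le_mul_of_le_mul hb hup hfin hbdd
  · rw [div_eq_inv_mul]
    exact growthRate_le_mul_of_le_mul (inv_pos.2 ha) hlow' hfin₀ hbdd₀

theorem growthRate_mul_mem_Icc_of_biLipschitz (ha : 0 < a) (hb : 0 < b)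
    (hlow : ∀ x, a * ℓ₀ x ≤ ℓ x) (hup : ∀ x, ℓ x ≤ b * ℓ₀ x)
    (hfin₀ : ∀ T, {x | ℓ₀ x ≤ T}.Finite)
    (hbdd₀ : IsBoundedUnder (· ≤ ·) atTop (logCountRate ℓ₀)) {x : A} (hx : 0 ≤ ℓ₀ x) :
    growthRate ℓ * ℓ x ∈
      Icc (a / b * (growthRate ℓ₀ * ℓ₀ x)) (b / a * (growthRate ℓ₀ * ℓ₀ x)) := by
  obtain ⟨hrate_ge, hrate_le⟩ :=
    growthRate_mem_Icc_of_biLipschitz ha hb hlow hup hfin₀ hbdd₀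
  have hax : 0 ≤ a * ℓ₀ x := mul_nonneg ha.le hx
  constructor
  · calc a / b * (growthRate ℓ₀ * ℓ₀ x) = growthRate ℓ₀ / b * (a * ℓ₀ x) := by ring
      _ ≤ growthRate ℓ * ℓ x := mul_le_mul hrate_ge (hlow x) hax (growthRate_nonneg ℓ)
  · calc growthRate ℓ * ℓ x ≤ growthRate ℓ₀ / a * (b * ℓ₀ x) :=
          mul_le_mul hrate_le (hup x) (hax.trans (hlow x))
            (div_nonneg (growthRate_nonneg ℓ₀) ha.le)
      _ = b / a * (growthRate ℓ₀ * ℓ₀ x) := by ring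

end BiLipschitz

theorem renormalized_length_biLipschitz {A : Type*} (ℓ₀ ℓ : A → ℝ)
    (hpos : ∀ a, 0 < ℓ₀ a)
    (hfin₀ : ∀ T : ℝ, {a : A | ℓ₀ a ≤ T}.Finite)
    (hgr₀ : growthRate ℓ₀ = 1)
    (B s : ℝ) (hB : 1 ≤ B) (hs : 0 < s)
    (hlow : ∀ a, (s / B) * ℓ₀ a ≤ ℓ a)
    (hup : ∀ a, ℓ a ≤ B * s * ℓ₀ a) :
    (∀ T : ℝ, {a : A | ℓ a ≤ T}.Finite) ∧
    (1 / (B * s) ≤ growthRate ℓ ∧ growthRate ℓ ≤ B / s) ∧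
    (∀ a, (1 / B ^ 2) * ℓ₀ a ≤ growthRate ℓ * ℓ a ∧
      growthRate ℓ * ℓ a ≤ B ^ 2 * ℓ₀ a) := by
  have hB_pos : 0 < B := one_pos.trans_le hB
  have hsB : 0 < s / B := div_pos hs hB_pos
  have hBs : 0 < B * s := mul_pos hB_pos hs
  have hbdd₀ : IsBoundedUnder (· ≤ ·) atTop (logCountRate ℓ₀) :=
    isBoundedUnder_logCountRate_of_growthRate_ne_zero (hgr₀ ▸ one_ne_zero)
  refine ⟨finite_sublevel_of_mul_le hsB hlow hfin₀, ?_, fun a => ?_⟩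
  · have hrate := growthRate_mem_Icc_of_biLipschitz hsB hBs hlow hup hfin₀ hbdd₀
    rwa [hgr₀, one_div_div] at hrate
  · have hratio : s / B / (B * s) = 1 / B ^ 2 := by field_simp
    have hratio' : B * s / (s / B) = B ^ 2 := by field_simp
    have hrenorm :=
      growthRate_mul_mem_Icc_of_biLipschitz hsB hBs hlow hup hfin₀ hbdd₀ (hpos a).le
    rwa [hgr₀, one_mul, hratio, hratio'] at hrenorm
end

section
/- Let X and Y be metric spaces, let (ψ¹_t)_{t≥0} be a family of maps X → X and (ψ²_t)_{t≥0} a family of maps Y → Y, and let h : X → Y and g : Y → X satisfy g ∘ h = id_X and h ∘ ψ¹_t = ψ²_t ∘ h for every t ≥ 0. Fix α₀ ∈ (0,1] and constants C_h, C_g > 0 such that d(h(x), h(x')) ≤ C_h · d(x, x')^{α₀} for all x, x' ∈ X and d(g(y), g(y')) ≤ C_g · d(y, y')^{α₀} for all y, y' ∈ Y. Suppose x, y ∈ X, C₁, λ > 0 and α₁ ∈ (0,1] satisfy d(ψ¹_t(x), ψ¹_t(y)) ≤ C₁ · e^{−λt} · d(x, y)^{α₁} for all t ≥ 0. Then for all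 t ≥ 0, d(ψ²_t(h(x)), ψ²_t(h(y))) ≤ C₂ · e^{−λ·α₀·t} · d(h(x), h(y))^{α₀²·α₁}, where C₂ = C_h · C₁^{α₀} · C_g^{α₀·α₁}. -/
/-!
Each of the three assumed estimates bounds one distance by a constant times a power of another, and
such bounds compose with their exponents multiplying. Going from `Y` back to `X`, along the first
flow, and forward to `Y` again therefore multiplies the three exponents. The Hölder bound on `h` is
the only one applied after the contraction, so its exponent alone changes the rate.
-/

theorem le_mul_rpow_trans {a b c A B p q : ℝ} (hA : 0 ≤ A) (hb : 0 ≤ b) (hB : 0 ≤ B) (hc : 0 ≤ c)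
    (hp : 0 ≤ p) (hab : a ≤ A * b ^ p) (hbc : b ≤ B * c ^ q) :
    a ≤ A * B ^ p * c ^ (q * p) :=
  calc
    a ≤ A * b ^ p := hab
    _ ≤ A * (B * c ^ q) ^ p := by gcongr
    _ = A * B ^ p * c ^ (q * p) := by
      rw [Real.mul_rpow hB (Real.rpow_nonneg hc q), ← Real.rpow_mul hc, mul_assoc]

theorem mul_exp_rpow {C : ℝ} (hC : 0 ≤ C) (s p : ℝ) :
    (C * Real.exp s) ^ p = C ^ p * Real.exp (s * p) := by
  rw [Real.mul_rpow hC (Real.exp_nonneg s), ← Real.exp_mul]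

theorem holder_conjugacy_transfers_contraction_general
    {X Y : Type*} [PseudoMetricSpace X] [PseudoMetricSpace Y] {T : Set ℝ}
    {ψ₁ : ℝ → X → X} {ψ₂ : ℝ → Y → Y} {h : X → Y}
    (hconj : ∀ t ∈ T, Function.Semiconj h (ψ₁ t) (ψ₂ t))
    {α β γ Ch Cg C₁ lam : ℝ} (hα : 0 ≤ α) (hγ : 0 ≤ γ)
    (hCh : 0 ≤ Ch) (hCg : 0 ≤ Cg) (hC₁ : 0 ≤ C₁)
    (hHold : ∀ x x' : X, dist (h x) (h x') ≤ Ch * dist x x' ^ α)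
    {x y : X} (hinv : dist x y ≤ Cg * dist (h x) (h y) ^ β)
    (hcontr : ∀ t ∈ T, dist (ψ₁ t x) (ψ₁ t y) ≤ C₁ * Real.exp (-lam * t) * dist x y ^ γ) :
    ∀ t ∈ T, dist (ψ₂ t (h x)) (ψ₂ t (h y)) ≤
      (Ch * C₁ ^ α * Cg ^ (α * γ)) * Real.exp (-(lam * α) * t) *
        dist (h x) (h y) ^ (α * β * γ) := by
  intro t ht
  have image_le_initial : dist (h (ψ₁ t x)) (h (ψ₁ t y)) ≤
      Ch * (C₁ * Real.exp (-lam * t)) ^ α * dist x y ^ (γ * α) :=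
    le_mul_rpow_trans hCh dist_nonneg (by positivity) dist_nonneg hα (hHold _ _) (hcontr t ht)
  calc
    dist (ψ₂ t (h x)) (ψ₂ t (h y)) = dist (h (ψ₁ t x)) (h (ψ₁ t y)) := by
      rw [hconj t ht x, hconj t ht y]
    _ ≤ Ch * (C₁ * Real.exp (-lam * t)) ^ α * Cg ^ (γ * α) *
          dist (h x) (h y) ^ (β * (γ * α)) :=
      le_mul_rpow_trans (by positivity) dist_nonneg hCg dist_nonneg (by positivity)
        image_le_initial hinv
    _ = (Ch * C₁ ^ α * Cg ^ (α * γ)) * Real.exp (-(lam * α) * t) *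
          dist (h x) (h y) ^ (α * β * γ) := by
      rw [mul_exp_rpow hC₁]
      ring_nf

theorem holder_conjugacy_transfers_contraction
    {X Y : Type*} [MetricSpace X] [MetricSpace Y]
    (ψ₁ : ℝ → X → X) (ψ₂ : ℝ → Y → Y) (h : X → Y) (g : Y → X)
    (hgh : ∀ x : X, g (h x) = x)
    (hconj : ∀ t : ℝ, 0 ≤ t → ∀ x : X, h (ψ₁ t x) = ψ₂ t (h x))
    (α₀ : ℝ) (hα₀pos : 0 < α₀) (hα₀le : α₀ ≤ 1)
    (Ch Cg : ℝ) (hCh : 0 < Ch) (hCg : 0 < Cg)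
    (hHoldh : ∀ x x' : X, dist (h x) (h x') ≤ Ch * dist x x' ^ α₀)
    (hHoldg : ∀ y y' : Y, dist (g y) (g y') ≤ Cg * dist y y' ^ α₀)
    (x y : X) (C₁ lam : ℝ) (hC₁ : 0 < C₁) (hlam : 0 < lam)
    (α₁ : ℝ) (hα₁pos : 0 < α₁) (hα₁le : α₁ ≤ 1)
    (hcontr : ∀ t : ℝ, 0 ≤ t →
      dist (ψ₁ t x) (ψ₁ t y) ≤ C₁ * Real.exp (-lam * t) * dist x y ^ α₁) :
    ∀ t : ℝ, 0 ≤ t →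
      dist (ψ₂ t (h x)) (ψ₂ t (h y)) ≤
        (Ch * C₁ ^ α₀ * Cg ^ (α₀ * α₁)) * Real.exp (-(lam * α₀) * t) *
          dist (h x) (h y) ^ (α₀ ^ 2 * α₁) := by
  have hinv : dist x y ≤ Cg * dist (h x) (h y) ^ α₀ := by
    simpa only [hgh] using hHoldg (h x) (h y)
  simpa only [sq, Set.mem_Ici] using holder_conjugacy_transfers_contraction_general
    (T := Set.Ici 0) hconj hα₀pos.le hα₁pos.le hCh.le hCg.le hC₁.le hHoldh hinv hcontr
end
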